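/- For all integers k >= 0 and m, j >= 0, setting n = 2m + kj, the cardinality of P_{n,k}^{m,j} equals (1/(m+1)) * C(m+j, m) * C(2m+j, m). -/

import Mathlib

open Finset

inductive Step : Type
  | u | d | h
deriving DecidableEq

/-- Lengths of maximal blocks of letters with `wt s ≠ none`, weighted by `wt`. -/
def runs (wt : Step → Option ℕ) : List Step → List ℕ
  | [] => []
  | s :: l =>
    match wt s, runs wt l with
    | none, r => r
    | some n, r =>
      match l with
      | [] => [n]
      | s' :: _ =>
        match wt s' with
        | none => n :: r
        | some _ =>
          match r with
          | a :: rest => (n + a) :: rest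
          | [] => [n]

def uRuns : List Step → List ℕ :=
  runs (fun s => match s with | Step.u => some 1 | _ => none)

def uhRuns (k : ℕ) : List Step → List ℕ :=
  runs (fun s => match s with | Step.u => some 1 | Step.h => some k | Step.d => none)

def alpha (i : ℕ) (w : List Step) : ℕ := (uRuns w).count i

def beta (i : ℕ) (w : List Step) : ℕ := (uRuns w).tail.count i

def IsNonneg (w : List Step) : Prop :=
  ∀ i : ℕ, (w.take i).count Step.d ≤ (w.take i).count Step.u

def pathSet (m j : ℕ) : Set (List Step) :=
  {w | w.count Step.u = m ∧ w.count Step.d = m ∧ w.count Step.h = j ∧ IsNonneg w}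

/-- no horizontal step lies on the x-axis -/
def NoLowH (w : List Step) : Prop :=
  ∀ (i : ℕ) (hi : i < w.length), w[i]'hi = Step.h →
    (w.take i).count Step.u ≠ (w.take i).count Step.d

def qSet (m j : ℕ) : Set (List Step) :=
  {w | w ∈ pathSet m j ∧ NoLowH w}

/-- normalized partial Bell polynomial (r!/m!) B_{m,r}(1!t₁,2!t₂,…) -/
def bellNorm (m r : ℕ) (t : ℕ → ℚ) : ℚ :=
  ∑ f : Fin m → Fin (m + 1),
    if (∑ i : Fin m, (f i : ℕ)) = r ∧ (∑ i : Fin m, ((i : ℕ) + 1) * (f i : ℕ)) = m then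
      (r.factorial : ℚ) / (∏ i : Fin m, ((f i : ℕ).factorial : ℚ)) * ∏ i : Fin m, t ((i : ℕ) + 1) ^ (f i : ℕ)
    else 0

/-- normalized potential polynomial  P_p^{(lam)}(1!t₁,2!t₂,…)/p! -/
def potential (lam p : ℕ) (t : ℕ → ℚ) : ℚ :=
  ∑ r ∈ Finset.range (p + 1), (Nat.choose lam r : ℚ) * bellNorm p r t

/-! Erasing the horizontal steps of a path leaves a Dyck word of semilength `m`, because they do not
change the height. The path is recovered from that word by choosing which `j` of its `2m + j`
letters are horizontal. Hence there are `catalan m * C(2m + j, j)` paths. -/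

lemma disjoint_image_cons {α : Type*} {a b : α} (hab : a ≠ b) (S T : Set (List α)) :
    Disjoint (List.cons a '' S) (List.cons b '' T) := by
  rw [Set.disjoint_left]
  rintro _ ⟨v, -, rfl⟩ ⟨w, -, h⟩
  exact hab (List.cons.inj h).1.symm

section PaddedWords

variable {α β : Type*} [DecidableEq α] (e : α ≃ Option β)

/-- The words obtained from the word `v` by inserting `j` blank letters anywhere. The alphabet `α`
consists of the letters `β` of `v` and one blank, which `e` sends to `none`. -/
def paddedWords (v : List β) (j : ℕ) : Set (List α) :=
  {w | w.filterMap e = v ∧ w.count (e.symm none) = j}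

lemma paddedWords_nil (j : ℕ) :
    paddedWords e [] j = {List.replicate j (e.symm none)} := by
  ext w
  constructor
  · rintro ⟨hw, rfl⟩
    have all_blank : ∀ a ∈ w, a = e.symm none := fun a ha =>
      e.eq_symm_apply.2 (List.filterMap_eq_nil_iff.1 hw a ha)
    exact List.eq_replicate_iff.2
      ⟨(List.count_eq_length.2 fun a ha => (all_blank a ha).symm).symm, all_blank⟩
  · rintro rfl
    simp [paddedWords]

lemma paddedWords_cons_zero (b : β) (v : List β) :
    paddedWords e (b :: v) 0 = List.cons (e.symm (some b)) '' paddedWords e v 0 := by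
  ext w
  cases w with
  | nil => simp [paddedWords]
  | cons a w =>
    obtain ⟨o, rfl⟩ := e.symm.surjective a
    cases o <;> simp [paddedWords, and_assoc, and_comm, eq_comm]

lemma paddedWords_cons_succ (b : β) (v : List β) (j : ℕ) :
    paddedWords e (b :: v) (j + 1) =
      List.cons (e.symm none) '' paddedWords e (b :: v) j ∪
        List.cons (e.symm (some b)) '' paddedWords e v (j + 1) := by
  ext w
  cases w with
  | nil => simp [paddedWords]
  | cons a w =>
    obtain ⟨o, rfl⟩ := e.symm.surjective a
    cases o <;> simp [paddedWords, and_assoc, and_comm, eq_comm]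

theorem encard_paddedWords (v : List β) (j : ℕ) :
    (paddedWords e v j).encard = (v.length + j).choose j := by
  have encard_cons (a : α) (S : Set (List α)) : (List.cons a '' S).encard = S.encard :=
    List.cons_injective.encard_image S
  induction v generalizing j with
  | nil => simp [paddedWords_nil]
  | cons b v ihv =>
    induction j with
    | zero => simp [paddedWords_cons_zero, encard_cons, ihv]
    | succ j ihj =>
      have blank_ne : e.symm none ≠ e.symm (some b) := by simp
      have pascal : (v.length + 1 + (j + 1)).choose (j + 1) =
          (v.length + 1 + j).choose j + (v.length + (j + 1)).choose (j + 1) := by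
        rw [← add_assoc, Nat.choose_succ_succ, Nat.succ_eq_add_one, add_right_comm, add_assoc]
      rw [paddedWords_cons_succ, Set.encard_union_eq (disjoint_image_cons blank_ne _ _),
        encard_cons, encard_cons, ihv, ihj, List.length_cons, pascal, Nat.cast_add]

lemma disjoint_paddedWords {v v' : List β} (h : v ≠ v') (j : ℕ) :
    Disjoint (paddedWords e v j) (paddedWords e v' j) := by
  rw [Set.disjoint_left]
  rintro w ⟨hv, -⟩ ⟨hv', -⟩
  exact h (hv.symm.trans hv')

end PaddedWords

lemma count_filterMap_equiv {α β : Type*} [DecidableEq α] [DecidableEq β] (e : α ≃ Option β)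
    (b : β) (w : List α) : (w.filterMap e).count b = w.count (e.symm (some b)) := by
  rw [List.count_filterMap, List.count_eq_countP]
  refine List.countP_congr fun a _ => ?_
  simp [Equiv.eq_symm_apply]

lemma forall_take_iff_forall_prefix {α : Type*} {P : List α → Prop} {w : List α} :
    (∀ i, P (w.take i)) ↔ ∀ v, v <+: w → P v := by
  refine ⟨fun h v hv => ?_, fun h i => h _ (w.take_prefix i)⟩
  rw [List.prefix_iff_eq_take.1 hv]
  exact h _

/-- The steps of a Dyck word together with the horizontal step, which is the blank `none`. -/
def Step.equivOptionDyckStep : Step ≃ Option DyckStep where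
  toFun
    | .u => some .U
    | .d => some .D
    | .h => none
  invFun
    | some .U => .u
    | some .D => .d
    | none => .h
  left_inv s := by cases s <;> rfl
  right_inv
    | some .U => rfl
    | some .D => rfl
    | none => rfl

/-- The word over up- and down-steps left after erasing the horizontal steps of `w`. -/
def dyckPart (w : List Step) : List DyckStep :=
  w.filterMap Step.equivOptionDyckStep

lemma count_U_dyckPart (w : List Step) : (dyckPart w).count .U = w.count .u :=
  count_filterMap_equiv Step.equivOptionDyckStep .U w

lemma count_D_dyckPart (w : List Step) : (dyckPart w).count .D = w.count .d :=
  count_filterMap_equiv Step.equivOptionDyckStep .D w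

lemma isNonneg_iff_dyckPart (w : List Step) :
    IsNonneg w ↔ ∀ i, ((dyckPart w).take i).count .D ≤ ((dyckPart w).take i).count .U := by
  rw [IsNonneg, forall_take_iff_forall_prefix (P := fun v => v.count Step.d ≤ v.count Step.u),
    forall_take_iff_forall_prefix (P := fun v => v.count DyckStep.D ≤ v.count DyckStep.U)]
  simp only [dyckPart, List.prefix_filterMap_iff]
  constructor
  · rintro h _ ⟨v, hv, rfl⟩
    rw [← dyckPart, count_U_dyckPart, count_D_dyckPart]
    exact h v hv
  · intro h v hv
    rw [← count_U_dyckPart, ← count_D_dyckPart]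
    exact h _ ⟨v, hv, rfl⟩

lemma pathSet_eq_iUnion_paddedWords (m j : ℕ) :
    pathSet m j = ⋃ p : {p : DyckWord // p.semilength = m},
      paddedWords Step.equivOptionDyckStep p.1.toList j := by
  ext w
  simp only [Set.mem_iUnion]
  constructor
  · rintro ⟨hu, hd, hh, hw⟩
    refine ⟨⟨⟨dyckPart w, ?_, (isNonneg_iff_dyckPart w).1 hw⟩, ?_⟩, rfl, hh⟩
    · rw [count_U_dyckPart, count_D_dyckPart, hu, hd]
    · exact (count_U_dyckPart w).trans hu
  · rintro ⟨⟨p, hp⟩, hw, hh⟩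
    replace hw : dyckPart w = p.toList := hw
    refine ⟨?_, ?_, hh, ?_⟩
    · rw [← count_U_dyckPart, hw, ← hp, DyckWord.semilength]
    · rw [← count_D_dyckPart, hw, ← hp, p.semilength_eq_count_D]
    · rw [isNonneg_iff_dyckPart, hw]
      exact p.count_D_le_count_U

theorem ncard_pathSet (m j : ℕ) :
    (pathSet m j).ncard = catalan m * (2 * m + j).choose j := by
  have fiber (p : {p : DyckWord // p.semilength = m}) :
      (paddedWords Step.equivOptionDyckStep p.1.toList j).encard = (2 * m + j).choose j := by
    rw [encard_paddedWords, ← p.1.two_mul_semilength_eq_length, p.2]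
  have disjoint : Pairwise (Function.onFun Disjoint
      fun p : {p : DyckWord // p.semilength = m} =>
        paddedWords Step.equivOptionDyckStep p.1.toList j) := fun p q hpq =>
    disjoint_paddedWords _ (fun h => hpq (Subtype.ext (DyckWord.ext h))) j
  have encard_eq : (pathSet m j).encard = (catalan m * (2 * m + j).choose j : ℕ) := by
    rw [pathSet_eq_iUnion_paddedWords, Set.encard_iUnion_of_finite disjoint,
      finsum_eq_sum_of_fintype, Finset.sum_congr rfl fun p _ => fiber p, Finset.sum_const,
      Finset.card_univ, DyckWord.card_dyckWord_semilength_eq_catalan, nsmul_eq_mul, Nat.cast_mul]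
  rw [Set.ncard, encard_eq, ENat.toNat_natCast]

lemma succ_mul_catalan_mul_choose (m j : ℕ) :
    (m + 1) * (catalan m * (2 * m + j).choose j) =
      (m + j).choose m * (2 * m + j).choose m := by
  calc
    (m + 1) * (catalan m * (2 * m + j).choose j)
    _ = (2 * m + j).choose (2 * m) * (2 * m).choose m := by
        rw [← mul_assoc, succ_mul_catalan_eq_centralBinom, Nat.centralBinom, mul_comm,
          Nat.choose_symm_add]
    _ = (2 * m + j).choose m * (2 * m + j - m).choose (2 * m - m) :=
        Nat.choose_mul (by omega)
    _ = (m + j).choose m * (2 * m + j).choose m := by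
        rw [mul_comm, show 2 * m + j - m = m + j by omega, show 2 * m - m = m by omega]

theorem stmt4 (k m j : ℕ) :
    (Set.ncard (pathSet m j) : ℚ) =
      (1 : ℚ) / (m + 1) * Nat.choose (m + j) m * Nat.choose (2 * m + j) m := by
  have count : (m + 1) * (pathSet m j).ncard = (m + j).choose m * (2 * m + j).choose m := by
    rw [ncard_pathSet, succ_mul_catalan_mul_choose]
  have count_rat : ((m : ℚ) + 1) * (pathSet m j).ncard =
      (m + j).choose m * (2 * m + j).choose m := by exact_mod_cast count
  rw [mul_assoc, ← count_rat]
  field_simp
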